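/- Let q ≥ 5 be prime, let p and p′ be primes with p ≡ p′ ≡ 1 (mod 3), p ≠ q, p′ ≠ q, and let L, M, L′, M′ be integers with 4p = L² + 27M² and 4p′ = L′² + 27M′². Suppose there is an integer k not divisible by q with L′ ≡ kL (mod q) and M′ ≡ kM (mod q). Then q^{(p−1)/3} ≡ −(L + 3M)·(6M)⁻¹ (mod p) if and only if q^{(p′−1)/3} ≡ −(L′ + 3M′)·(6M′)⁻¹ (mod p′). -/

import Mathlib

/-!
Let `χ` be a cubic character of `𝔽_p` with values in a field of characteristic `q`. The Frobenius
sends the Gauss sum `g(χ)` to `χ ^ q (q)⁻¹ g(χ ^ q)`, and `g(χ) ^ 3 = p J(χ, χ)`. Writing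
`J = J(χ, χ)`, `J' = J(χ⁻¹, χ⁻¹)` and `n = ⌊(q + 1) / 3⌋`, so that `q = 3 n ± 1`, these combine to
`J ^ n = χ(q) ^ q J' ^ n`. This relation is homogeneous in `J`, hence `χ(q)` only depends on the
line through `J`.

If `χ` is the cubic residue character modulo a prime `π` of `ℤ[ω]` over `p`, then `2 J` and
`L + 3 M (1 + 2 ω)` agree up to sign: both have norm `4 p`, vanish modulo `π`, and have a
coefficient of `ω` divisible by `6`. Reducing `ℤ[ω]` to characteristic `q`, the line through `J`
becomes the line through `(L, M)` modulo `q`.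
-/

open QuadraticAlgebra

section PrimitiveCubeRoots

variable {R : Type*} [CommRing R] [IsDomain R] {w : R}

theorem sq_add_self_add_one_eq_zero_of_isPrimitiveRoot (hw : IsPrimitiveRoot w 3) :
    w ^ 2 + w + 1 = 0 := by
  have hsum := hw.geom_sum_eq_zero (by norm_num)
  rw [Finset.sum_range_succ, Finset.sum_range_succ, Finset.sum_range_one] at hsum
  linear_combination hsum

theorem isPrimitiveRoot_three_of_sq_add_self_add_one_eq_zero (h3 : (3 : R) ≠ 0)
    (hw : w ^ 2 + w + 1 = 0) : IsPrimitiveRoot w 3 := by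
  have : NeZero ((3 : ℕ) : R) := ⟨by exact_mod_cast h3⟩
  rw [← Polynomial.isRoot_cyclotomic_iff, Polynomial.cyclotomic_three]
  simpa using hw

theorem isPrimitiveRoot_three_of_sq_add_sq {F : Type*} [Field F] {x y : F}
    (h : x ^ 2 + 27 * y ^ 2 = 0) (hy : 6 * y ≠ 0) :
    IsPrimitiveRoot (-(x + 3 * y) * (6 * y)⁻¹) 3 := by
  have h3 : (3 : F) ≠ 0 := fun h3 ↦ hy (by linear_combination 2 * y * h3)
  apply isPrimitiveRoot_three_of_sq_add_self_add_one_eq_zero h3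
  have hy' : (6 * y) * (6 * y)⁻¹ = 1 := mul_inv_cancel₀ hy
  generalize (6 * y)⁻¹ = z at *
  linear_combination z ^ 2 * h + (-1 - 6 * y * z + z * (x + 3 * y)) * hy'

end PrimitiveCubeRoots

section RootsOfUnity

theorem injOn_setOf_pow_eq_one {R S : Type*} [CommRing R] [IsDomain R] [CommRing S] {n : ℕ}
    [NeZero n] {f : R →+* S} {μ : R} (hμ : IsPrimitiveRoot μ n) (hfμ : IsPrimitiveRoot (f μ) n) :
    Set.InjOn f {z | z ^ n = 1} := by
  intro y hy z hz hyz
  obtain ⟨i, hi, rfl⟩ := hμ.eq_pow_of_pow_eq_one hy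
  obtain ⟨j, hj, rfl⟩ := hμ.eq_pow_of_pow_eq_one hz
  rw [map_pow, map_pow] at hyz
  rw [hfμ.pow_inj hi hj hyz]

theorem mulChar_apply_pow_eq_one {M R : Type*} [CommMonoid M] [CommRing R] {χ : MulChar M R} {n : ℕ}
    (hχ : χ ^ n = 1) {x : M} (hx : IsUnit x) : χ x ^ n = 1 := by
  obtain ⟨u, rfl⟩ := hx
  rw [← MulChar.pow_apply_coe, hχ, MulChar.one_apply_coe]

theorem map_mulChar_apply_eq_map_iff {M R S : Type*} [CommMonoid M] [CommRing R] [IsDomain R]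
    [CommRing S] {n : ℕ} [NeZero n] {f : R →+* S} {μ : R} (hμ : IsPrimitiveRoot μ n)
    (hfμ : IsPrimitiveRoot (f μ) n) {χ : MulChar M R} (hχ : χ ^ n = 1) {x : M} (hx : IsUnit x) :
    f (χ x) = f μ ↔ χ x = μ :=
  (injOn_setOf_pow_eq_one hμ hfμ).eq_iff (mulChar_apply_pow_eq_one hχ hx) hμ.pow_eq_one

theorem orderOf_mulChar_ringHomComp {M R S : Type*} [CommMonoid M] [CommRing R] [CommRing S] {n : ℕ}
    {f : R →+* S} (hf : Set.InjOn f {z | z ^ n = 1}) {χ : MulChar M R} (hχ : χ ^ n = 1) :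
    orderOf (χ.ringHomComp f) = orderOf χ := by
  refine orderOf_eq_orderOf_iff.mpr fun k ↦ ⟨fun h ↦ ?_, fun h ↦ ?_⟩
  · ext x
    have hχk : (χ ^ k) ^ n = 1 := by rw [pow_right_comm, hχ, one_pow]
    refine hf (mulChar_apply_pow_eq_one hχk x.isUnit) (by simp) ?_
    rw [← MulChar.ringHomComp_apply, ← MulChar.ringHomComp_pow, h, MulChar.one_apply_coe,
      MulChar.one_apply_coe, map_one]
  · rw [MulChar.ringHomComp_pow, h, MulChar.ringHomComp_one]

end RootsOfUnity

section PowerResidueChar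

variable {F R : Type*} [Field F] [Fintype F] [CommRing R]

/-- `χ` is the `n`-th power residue character of `F`, lifted along a reduction map `φ : R → F`:
its values are `n`-th roots of unity of `R`, and reducing them gives Euler's criterion. It is
unique when `φ` is injective on the `n`-th roots of unity. -/
structure IsPowerResidueChar (φ : R →+* F) (n : ℕ) (χ : MulChar F R) : Prop where
  pow_eq_one : χ ^ n = 1
  map_apply (x : F) : φ (χ x) = x ^ ((Fintype.card F - 1) / n)

theorem dvd_card_sub_one_of_isPrimitiveRoot {n : ℕ} {r : F} (hr : IsPrimitiveRoot r n)
    (hn : n ≠ 0) : n ∣ Fintype.card F - 1 :=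
  hr.dvd_of_pow_eq_one _ (FiniteField.pow_card_sub_one_eq_one r (hr.ne_zero hn))

theorem exists_isPowerResidueChar [IsDomain R] {n : ℕ} [NeZero n] {φ : R →+* F} {μ : R}
    (hμ : IsPrimitiveRoot μ n) (hφμ : IsPrimitiveRoot (φ μ) n) :
    ∃ χ : MulChar F R, IsPowerResidueChar φ n χ := by
  have hn : n ∣ Fintype.card F - 1 := dvd_card_sub_one_of_isPrimitiveRoot hφμ (NeZero.ne n)
  set m := (Fintype.card F - 1) / n
  have hroot (x : Fˣ) : ∃ z : R, z ^ n = 1 ∧ φ z = (x : F) ^ m := by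
    obtain ⟨i, -, hi⟩ := hφμ.eq_pow_of_pow_eq_one (ξ := (x : F) ^ m) (by
      rw [← pow_mul, Nat.div_mul_cancel hn, FiniteField.pow_card_sub_one_eq_one _ x.ne_zero])
    exact ⟨μ ^ i, by rw [pow_right_comm, hμ.pow_eq_one, one_pow], by rw [map_pow, hi]⟩
  choose c hc hφc using hroot
  have hinj := injOn_setOf_pow_eq_one hμ hφμ
  let τ : Fˣ →* Rˣ :=
    { toFun x := Units.ofPowEqOne (c x) n (hc x) (NeZero.ne n)
      map_one' := Units.ext <| hinj (hc 1) (by simp) (by simp [hφc])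
      map_mul' x y := Units.ext <| hinj (hc _) (by simp [mul_pow, hc])
        (by simp [hφc, mul_pow]) }
  refine ⟨MulChar.ofUnitHom τ, ?_, fun x ↦ ?_⟩
  · ext x
    simp [MulChar.pow_apply_coe, τ, hc]
  · rcases eq_or_ne x 0 with rfl | hx
    · have hm0 : m ≠ 0 := (Nat.div_pos (Nat.le_of_dvd (Nat.sub_pos_of_lt Fintype.one_lt_card) hn)
        (NeZero.pos n)).ne'
      rw [MulChar.map_zero, map_zero, zero_pow hm0]
    · lift x to Fˣ using hx.isUnit
      simpa [τ] using hφc x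

theorem sum_pow_mul_one_sub_pow_eq_zero {a b : ℕ} (hab : a + b < Fintype.card F - 1) :
    ∑ x : F, x ^ a * (1 - x) ^ b = 0 := by
  have hexp (x : F) : x ^ a * (1 - x) ^ b =
      ∑ i ∈ Finset.range (b + 1), (-1) ^ i * (b.choose i : F) * x ^ (a + i) := by
    rw [sub_eq_neg_add, add_pow, Finset.mul_sum]
    refine Finset.sum_congr rfl fun i _ ↦ ?_
    rw [neg_pow, pow_add]
    ring
  simp_rw [hexp]
  rw [Finset.sum_comm]
  refine Finset.sum_eq_zero fun i hi ↦ ?_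
  rw [← Finset.mul_sum, FiniteField.sum_pow_lt_card_sub_one, mul_zero]
  have := Finset.mem_range.mp hi
  omega

namespace IsPowerResidueChar

variable {φ : R →+* F} {n : ℕ} {χ : MulChar F R}

theorem orderOf_eq (h : IsPowerResidueChar φ n χ) (hn : n ∣ Fintype.card F - 1) :
    orderOf χ = n := by
  refine Nat.dvd_antisymm (orderOf_dvd_of_pow_eq_one h.pow_eq_one) ?_
  set m := (Fintype.card F - 1) / n
  have hmn : m * n = Fintype.card F - 1 := Nat.div_mul_cancel hn
  have hdvd : Fintype.card F - 1 ∣ m * orderOf χ := by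
    rw [← FiniteField.forall_pow_eq_one_iff F]
    intro x
    ext
    rw [Units.val_pow_eq_pow_val, pow_mul, ← h.map_apply, ← map_pow, ← MulChar.pow_apply_coe,
      pow_orderOf_eq_one, MulChar.one_apply_coe, map_one, Units.val_one]
  have hm : 0 < m := Nat.pos_of_mul_pos_right (hmn ▸ Nat.sub_pos_of_lt Fintype.one_lt_card)
  exact Nat.dvd_of_mul_dvd_mul_left hm (hmn ▸ hdvd)

theorem map_jacobiSum_eq_zero (h : IsPowerResidueChar φ n χ) (hn : 2 < n) :
    φ (jacobiSum χ χ) = 0 := by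
  simp only [jacobiSum, map_sum, map_mul, h.map_apply]
  apply sum_pow_mul_one_sub_pow_eq_zero
  have hcard : 0 < Fintype.card F - 1 := Nat.sub_pos_of_lt Fintype.one_lt_card
  have hle := Nat.div_mul_le_self (Fintype.card F - 1) n
  nlinarith

end IsPowerResidueChar

end PowerResidueChar

section CubicGaussSum

variable {F K : Type*} [Field F]

theorem ringChar_ne_of_natCast_ne_zero [Ring K] {q : ℕ} [CharP K q] (hq : (q : F) ≠ 0) :
    ringChar K ≠ ringChar F := by
  rw [ringChar.eq K q]
  rintro rfl
  exact hq ringChar.Nat.cast_ringChar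

variable [Fintype F] {q : ℕ}

theorem card_cast_ne_zero [Field K] [CharP K q] (hq : (q : F) ≠ 0) :
    (Fintype.card F : K) ≠ 0 := by
  obtain ⟨n, hp, hcard⟩ := FiniteField.card F (ringChar F)
  rw [hcard, Nat.cast_pow]
  exact pow_ne_zero _ fun h ↦
    ringChar_ne_of_natCast_ne_zero (K := K) hq (CharP.ringChar_of_prime_eq_zero hp h)

theorem gaussSum_cube [CommRing K] [IsDomain K] {χ : MulChar F K} (hχ : orderOf χ = 3)
    {ψ : AddChar F K} (hψ : ψ.IsPrimitive) :
    gaussSum χ ψ ^ 3 = Fintype.card F * jacobiSum χ χ := by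
  have hneg : χ (-1) = 1 :=
    MulChar.val_neg_one_eq_one_of_odd_order (n := 3) (by decide) (hχ ▸ pow_orderOf_eq_one χ)
  simpa [hχ, hneg] using gaussSum_pow_eq_prod_jacobiSum (by omega) hψ (χ := χ)

variable [Fact q.Prime]

theorem gaussSum_pow_char [CommRing K] [CharP K q] (hq : (q : F) ≠ 0) (χ : MulChar F K)
    (ψ : AddChar F K) : gaussSum χ ψ ^ q * (χ ^ q) q = gaussSum (χ ^ q) ψ := by
  rw [gaussSum_frob q, AddChar.pow_mulShift, mul_comm]
  exact gaussSum_mulShift (χ ^ q) ψ (Units.mk0 (q : F) hq)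

variable [Field K] [CharP K q]

theorem gaussSum_pow_mul_eq_gaussSum_inv_pow_mul (hq : (q : F) ≠ 0) (hq3 : ¬ 3 ∣ q)
    {χ : MulChar F K} (hχ : orderOf χ = 3) {ψ : AddChar F K} (hψ : ψ.IsPrimitive) :
    gaussSum χ ψ ^ (3 * ((q + 1) / 3)) * (χ ^ q) q =
      gaussSum χ⁻¹ ψ ^ (3 * ((q + 1) / 3)) * (χ⁻¹ ^ q) q := by
  have hfrob := gaussSum_pow_char hq χ ψ
  have hfrob' := gaussSum_pow_char hq χ⁻¹ ψ
  obtain h | h : q % 3 = 1 ∨ q % 3 = 2 := by omega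
  · have hpow : χ ^ q = χ := by rw [← pow_mod_orderOf, hχ, h, pow_one]
    rw [hpow] at hfrob ⊢
    rw [inv_pow, hpow] at hfrob' ⊢
    have hχ1 : χ ≠ 1 := fun h1 ↦ by simp [h1] at hχ
    have hcard : (Fintype.card F : K) ≠ 0 := card_cast_ne_zero hq
    have hexp : 3 * ((q + 1) / 3) + 1 = q := by omega
    have hcancel {g x : K} (hg : g ≠ 0) (hgx : g ^ q * x = g) :
        g ^ (3 * ((q + 1) / 3)) * x = 1 :=
      mul_right_cancel₀ hg (by rw [mul_right_comm, ← pow_succ, hexp, hgx, one_mul])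
    rw [hcancel (gaussSum_ne_zero_of_nontrivial hcard hχ1 hψ) hfrob,
      hcancel (gaussSum_ne_zero_of_nontrivial hcard (inv_ne_one.mpr hχ1) hψ) hfrob']
  · have hpow : χ ^ q = χ⁻¹ := by
      rw [← pow_mod_orderOf, hχ, h, eq_inv_iff_mul_eq_one, ← pow_succ]
      exact orderOf_dvd_iff_pow_eq_one.mp hχ.dvd
    rw [hpow] at hfrob ⊢
    rw [inv_pow, hpow, inv_inv] at hfrob' ⊢
    rw [show 3 * ((q + 1) / 3) = q + 1 by omega, pow_succ, pow_succ]
    linear_combination gaussSum χ ψ * hfrob - gaussSum χ⁻¹ ψ * hfrob'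

theorem jacobiSum_pow_eq_mul_jacobiSum_inv_pow_of_isPrimitive (hq : (q : F) ≠ 0) (hq3 : ¬ 3 ∣ q)
    {χ : MulChar F K} (hχ : orderOf χ = 3) {ψ : AddChar F K} (hψ : ψ.IsPrimitive) :
    jacobiSum χ χ ^ ((q + 1) / 3) = χ q ^ q * jacobiSum χ⁻¹ χ⁻¹ ^ ((q + 1) / 3) := by
  have hgauss := gaussSum_pow_mul_eq_gaussSum_inv_pow_mul hq hq3 hχ hψ
  have hq0 : q ≠ 0 := NeZero.ne q
  rw [pow_mul, pow_mul, gaussSum_cube hχ hψ, gaussSum_cube ((orderOf_inv χ).trans hχ) hψ,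
    mul_pow, mul_pow, MulChar.pow_apply' _ hq0, MulChar.pow_apply' _ hq0,
    MulChar.inv_apply_eq_inv', inv_pow] at hgauss
  have hcube : (χ q ^ q) ^ 3 = 1 := by
    rw [pow_right_comm,
      mulChar_apply_pow_eq_one (orderOf_dvd_iff_pow_eq_one.mp hχ.dvd) hq.isUnit, one_pow]
  have hinv : (χ q ^ q)⁻¹ * χ q ^ q = 1 :=
    inv_mul_cancel₀ fun h0 ↦ by simp [h0] at hcube
  have hcard : (Fintype.card F : K) ^ ((q + 1) / 3) ≠ 0 := pow_ne_zero _ (card_cast_ne_zero hq)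
  refine mul_left_cancel₀ hcard ?_
  linear_combination (χ q ^ q) ^ 2 * hgauss
    - (Fintype.card F : K) ^ ((q + 1) / 3) * jacobiSum χ χ ^ ((q + 1) / 3) * hcube
    + (Fintype.card F : K) ^ ((q + 1) / 3) * jacobiSum χ⁻¹ χ⁻¹ ^ ((q + 1) / 3) * χ q ^ q * hinv

theorem jacobiSum_pow_eq_mul_jacobiSum_inv_pow (hq : (q : F) ≠ 0) (hq3 : ¬ 3 ∣ q)
    {χ : MulChar F K} (hχ : orderOf χ = 3) :
    jacobiSum χ χ ^ ((q + 1) / 3) = χ q ^ q * jacobiSum χ⁻¹ χ⁻¹ ^ ((q + 1) / 3) := by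
  let ψ := AddChar.FiniteField.primitiveChar F K (ringChar_ne_of_natCast_ne_zero hq)
  let f := algebraMap K (CyclotomicField ψ.n K)
  have : CharP (CyclotomicField ψ.n K) q := charP_of_injective_algebraMap f.injective q
  have hfχ : orderOf (χ.ringHomComp f) = 3 :=
    (orderOf_mulChar_ringHomComp f.injective.injOn (pow_orderOf_eq_one χ)).trans hχ
  have hJ := jacobiSum_pow_eq_mul_jacobiSum_inv_pow_of_isPrimitive hq hq3 hfχ ψ.prim
  refine f.injective ?_
  simpa only [MulChar.ringHomComp_inv, jacobiSum_ringHomComp, MulChar.ringHomComp_apply, map_mul,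
    map_pow] using hJ

end CubicGaussSum

section JacobiSumCharZero

variable {F R : Type*} [Field F] [Fintype F] [CommRing R] [IsDomain R] [CharZero R]

theorem jacobiSum_mul_jacobiSum_inv_of_charZero {χ η : MulChar F R} (hχ : χ ≠ 1) (hη : η ≠ 1)
    (hχη : χ * η ≠ 1) : jacobiSum χ η * jacobiSum χ⁻¹ η⁻¹ = Fintype.card F := by
  let f := algebraMap R (FractionRing R)
  have hf : Function.Injective f := FaithfulSMul.algebraMap_injective R (FractionRing R)
  have : CharZero (FractionRing R) := charZero_of_injective_algebraMap hf
  have hchar : ringChar (FractionRing R) ≠ ringChar F := by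
    rw [ringChar.eq_zero]
    exact (CharP.ringChar_ne_zero_of_finite F).symm
  have hne {χ : MulChar F R} (hχ : χ ≠ 1) : χ.ringHomComp f ≠ 1 :=
    (MulChar.ringHomComp_ne_one_iff hf).mpr hχ
  have hJ := jacobiSum_mul_jacobiSum_inv hchar (hne hχ) (hne hη)
    (MulChar.ringHomComp_mul χ η f ▸ hne hχη)
  refine hf ?_
  simpa only [MulChar.ringHomComp_inv, jacobiSum_ringHomComp, map_mul, map_natCast] using hJ

end JacobiSumCharZero

section QuadraticAlgebraLemmas

variable {R : Type*} [CommRing R] {a b : R} {x y : QuadraticAlgebra R a b}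

theorem im_mul_star (x y : QuadraticAlgebra R a b) :
    (x * star y).im = x.im * y.re - y.im * x.re := by
  simp only [im_mul, im_star, mul_neg, re_star]
  ring

theorem algebraMap_im_mul_star (x y : QuadraticAlgebra R a b) :
    algebraMap R (QuadraticAlgebra R a b) (x * star y).im = x.im • y - y.im • x := by
  ext
  · simp only [im_mul_star, algebraMap_re, re_sub, re_smul, smul_eq_mul]
  · simp [mul_comm]

theorem map_ne_zero_of_intCast_norm_ne_zero {S : Type*} [CommRing S] {a b : ℤ}
    {f : QuadraticAlgebra ℤ a b →+* S} {x : QuadraticAlgebra ℤ a b} (hx : (x.norm : S) ≠ 0) :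
    f x ≠ 0 := by
  intro h
  rw [← eq_intCast (f.comp (algebraMap ℤ _)), RingHom.comp_apply, algebraMap_norm_eq_mul_star,
    map_mul, h, zero_mul] at hx
  exact hx rfl

theorem eq_or_eq_neg_of_im_mul_star_eq_zero [IsDomain R] (hxy : x.norm = y.norm)
    (hy : y.norm ≠ 0) (him : (x * star y).im = 0) : x = y ∨ x = -y := by
  obtain ⟨e, he⟩ : ∃ e : R, x * star y = algebraMap R _ e :=
    ⟨(x * star y).re, by ext <;> simp [him]⟩
  have hsq : e ^ 2 = y.norm ^ 2 := by
    rw [← norm_algebraMap (a := a) (b := b), ← he, map_mul, QuadraticAlgebra.norm_star, hxy, sq]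
  have hmul : y.norm • x = e • y := by
    rw [Algebra.smul_def, Algebra.smul_def, ← he, algebraMap_norm_eq_mul_star]
    ring
  rcases sq_eq_sq_iff_eq_or_eq_neg.mp hsq with rfl | rfl
  · exact .inl (smul_right_injective _ hy hmul)
  · exact .inr (smul_right_injective _ hy (by simpa using hmul))

end QuadraticAlgebraLemmas

/-- The ring `ℤ[ω]` of Eisenstein integers, with `ω ^ 2 = -1 - ω`. -/
abbrev EisensteinInt : Type := QuadraticAlgebra ℤ (-1) (-1)

namespace EisensteinInt

theorem three_mul_im_sq_le (z : EisensteinInt) : 3 * z.im ^ 2 ≤ 4 * z.norm := by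
  rw [norm_def]
  nlinarith [sq_nonneg (2 * z.re - z.im)]

theorem norm_nonneg (z : EisensteinInt) : 0 ≤ z.norm := by
  linarith [z.three_mul_im_sq_le, sq_nonneg z.im]

theorem norm_eq_zero_iff {z : EisensteinInt} : z.norm = 0 ↔ z = 0 := by
  refine ⟨fun h ↦ ?_, fun h ↦ by rw [h, QuadraticAlgebra.norm_zero]⟩
  have him : z.im = 0 := by nlinarith [z.three_mul_im_sq_le]
  have hre : z.re = 0 := by simpa [norm_def, him] using h
  ext <;> assumption

instance : IsDomain EisensteinInt :=
  have : NoZeroDivisors EisensteinInt := ⟨fun {x y} hxy ↦ by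
    rw [← norm_eq_zero_iff, ← norm_eq_zero_iff, ← mul_eq_zero, ← map_mul, hxy,
      QuadraticAlgebra.norm_zero]⟩
  NoZeroDivisors.to_isDomain _

theorem isPrimitiveRoot_omega : IsPrimitiveRoot (ω : EisensteinInt) 3 := by
  apply isPrimitiveRoot_three_of_sq_add_self_add_one_eq_zero (NeZero.charZero_ofNat).out
  ext <;> simp [sq]

section Lift

variable {R : Type*} [CommRing R] {w : R} (hw : w ^ 2 + w + 1 = 0)

/-- The ring homomorphism `ℤ[ω] → R` sending `ω` to a root `w` of `X² + X + 1`, i.e. reduction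
modulo a prime of `ℤ[ω]` when `R` is a finite field. -/
def lift : EisensteinInt →+* R :=
  (QuadraticAlgebra.lift (R := ℤ) (a := -1) (b := -1) ⟨w, by
    linear_combination (exp := 1) hw⟩ : EisensteinInt →ₐ[ℤ] R)

theorem lift_apply (z : EisensteinInt) : lift hw z = z.re + z.im * w := by
  simp [lift]

theorem lift_omega : lift hw ω = w := by simp [lift_apply]

end Lift

theorem norm_eq_one_of_isUnit {z : EisensteinInt} (hz : IsUnit z) : z.norm = 1 := by
  rcases Int.isUnit_iff.mp (isUnit_iff_norm_isUnit.mp hz) with h | h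
  · exact h
  · linarith [z.norm_nonneg]

theorem star_mulChar_eq_inv {A : Type*} [CommRing A] (χ : MulChar A EisensteinInt) :
    star χ = χ⁻¹ := by
  rw [eq_inv_iff_mul_eq_one]
  ext x : 1
  rw [MulChar.mul_apply, MulChar.star_apply, mul_comm, ← algebraMap_norm_eq_mul_star,
    norm_eq_one_of_isUnit (x.isUnit.map χ), map_one, MulChar.one_apply_coe]

theorem star_jacobiSum {A : Type*} [CommRing A] [Fintype A] (χ η : MulChar A EisensteinInt) :
    star (jacobiSum χ η) = jacobiSum χ⁻¹ η⁻¹ := by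
  simp [jacobiSum, ← star_mulChar_eq_inv]

section JacobiSum

variable {F : Type*} [Field F] [Fintype F]

theorem norm_jacobiSum {χ η : MulChar F EisensteinInt} (hχ : χ ≠ 1) (hη : η ≠ 1)
    (hχη : χ * η ≠ 1) : (jacobiSum χ η).norm = Fintype.card F := by
  apply algebraMap_injective (R := ℤ) (a := -1) (b := -1)
  rw [algebraMap_norm_eq_mul_star, star_jacobiSum,
    jacobiSum_mul_jacobiSum_inv_of_charZero hχ hη hχη, map_natCast]

theorem three_dvd_im_jacobiSum {χ η : MulChar F EisensteinInt} (hχ : χ ^ 3 = 1) (hη : η ^ 3 = 1)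
    (hF : 3 ∣ Fintype.card F - 1) : 3 ∣ (jacobiSum χ η).im := by
  obtain ⟨z, -, hz⟩ :=
    exists_jacobiSum_eq_neg_one_add (by norm_num) hχ hη hF isPrimitiveRoot_omega
  have hω : (ω - 1 : EisensteinInt) ^ 2 = (-3 : ℤ) • ω := by ext <;> simp [sq]
  rw [hz, hω, mul_smul_comm]
  simp

end JacobiSum

theorem eq_or_eq_neg_of_norm_eq_four_mul {p : ℕ} (hp : p.Coprime 6)
    {φ : EisensteinInt →+* ZMod p} {x y : EisensteinInt} (hx : x.norm = 4 * p)
    (hy : y.norm = 4 * p) (hx6 : 6 ∣ x.im) (hy6 : 6 ∣ y.im) (hφx : φ x = 0) (hφy : φ y = 0) :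
    x = y ∨ x = -y := by
  have hp0 : (p : ℤ) ≠ 0 := by
    intro h
    simp [Nat.cast_eq_zero.mp h] at hp
  refine eq_or_eq_neg_of_im_mul_star_eq_zero (hx.trans hy.symm) (by simpa [hy] using hp0) ?_
  have h6 : 6 ∣ (x * star y).im := by
    rw [im_mul_star]
    exact dvd_sub (hx6.mul_right _) (hy6.mul_right _)
  have hpdvd : (p : ℤ) ∣ (x * star y).im := by
    rw [← ZMod.intCast_zmod_eq_zero_iff_dvd]
    simpa [hφx, hφy] using congrArg φ (algebraMap_im_mul_star x y)
  obtain ⟨e, he⟩ : (p * 6 : ℤ) ∣ (x * star y).im :=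
    IsCoprime.mul_dvd (Nat.isCoprime_iff_coprime.mpr hp) hpdvd h6
  have hle := (x * star y).three_mul_im_sq_le
  rw [map_mul, QuadraticAlgebra.norm_star, hx, hy, he] at hle
  have he1 : e ^ 2 < 1 := by
    have : 0 < (p : ℤ) ^ 2 := by positivity
    nlinarith
  rw [he, Int.abs_lt_one_iff.mp ((sq_lt_one_iff_abs_lt_one _).mp he1), mul_zero]

/-- For the primary prime `π = a + bω` with `L = 2a - b` and `M = b / 3`, this is `2π`. -/
def twicePrimary (L M : ℤ) : EisensteinInt := ⟨L + 3 * M, 6 * M⟩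

theorem norm_twicePrimary (L M : ℤ) : (twicePrimary L M).norm = L ^ 2 + 27 * M ^ 2 := by
  rw [norm_def, twicePrimary]
  ring

theorem lift_twicePrimary {R : Type*} [CommRing R] {w : R} (hw : w ^ 2 + w + 1 = 0) (L M : ℤ) :
    lift hw (twicePrimary L M) = L + 3 * M * (1 + 2 * w) := by
  simp only [lift_apply, twicePrimary, Int.cast_add, Int.cast_mul, Int.cast_ofNat]
  ring

theorem lift_star_twicePrimary {R : Type*} [CommRing R] {w : R} (hw : w ^ 2 + w + 1 = 0)
    (L M : ℤ) : lift hw (star (twicePrimary L M)) = L - 3 * M * (1 + 2 * w) := by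
  simp only [lift_apply, twicePrimary, re_star, im_star, Int.cast_add, Int.cast_mul, Int.cast_neg,
    Int.cast_one, Int.cast_ofNat]
  ring

theorem two_mul_jacobiSum_eq_or_eq_neg_twicePrimary {p : ℕ} [Fact p.Prime] (hp : p.Coprime 6)
    (hp3 : 3 ∣ p - 1) {φ : EisensteinInt →+* ZMod p} {χ : MulChar (ZMod p) EisensteinInt}
    (hχ : IsPowerResidueChar φ 3 χ) {L M : ℤ} (h : (4 * p : ℤ) = L ^ 2 + 27 * M ^ 2)
    (hφ : φ (twicePrimary L M) = 0) :
    2 * jacobiSum χ χ = twicePrimary L M ∨ 2 * jacobiSum χ χ = -twicePrimary L M := by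
  have hcard : 3 ∣ Fintype.card (ZMod p) - 1 := by rwa [ZMod.card]
  have horder : orderOf χ = 3 := hχ.orderOf_eq hcard
  have hχ1 : χ ≠ 1 := fun h1 ↦ by simp [h1] at horder
  have hχχ : χ * χ ≠ 1 := by
    rw [← sq]
    exact pow_ne_one_of_lt_orderOf two_ne_zero (by omega)
  refine eq_or_eq_neg_of_norm_eq_four_mul hp ?_ ?_ ?_ ?_ ?_ hφ
  · rw [map_mul, norm_jacobiSum hχ1 hχ1 hχχ, ZMod.card]
    simp [norm_def]
  · rw [norm_twicePrimary, h]
  · obtain ⟨m, hm⟩ := three_dvd_im_jacobiSum hχ.pow_eq_one hχ.pow_eq_one hcard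
    exact ⟨m, by rw [two_mul, im_add, hm]; ring⟩
  · exact dvd_mul_right 6 M
  · rw [map_mul, hχ.map_jacobiSum_eq_zero (by norm_num), mul_zero]

end EisensteinInt

section CubicResidueCriterion

theorem mul_pow_eq_mul_mul_pow_iff {K : Type*} [Field K] {a : K} (ha : a ≠ 0) {c x y : K} {n : ℕ} :
    (a * x) ^ n = c * (a * y) ^ n ↔ x ^ n = c * y ^ n := by
  rw [mul_pow, mul_pow, mul_left_comm, mul_right_inj' (pow_ne_zero n ha)]

theorem prime_cast_ne_zero {R : Type*} [AddMonoidWithOne R] {p q : ℕ} [CharP R p] (hp : p.Prime)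
    (hq : q.Prime) (hpq : p ≠ q) : (q : R) ≠ 0 := by
  rwa [Ne, CharP.cast_eq_zero_iff R p, Nat.prime_dvd_prime_iff_eq hp hq]

theorem coprime_six_of_mod_three_eq_one {p : ℕ} (hp : p.Prime) (hp3 : p % 3 = 1) :
    p.Coprime 6 := by
  rw [hp.coprime_iff_not_dvd]
  intro h
  have := Nat.le_of_dvd (by norm_num) h
  interval_cases p <;> simp_all +decide

theorem six_mul_intCast_ne_zero {p : ℕ} [Fact p.Prime] (hp6 : p.Coprime 6) {L M : ℤ}
    (h : (4 * p : ℤ) = L ^ 2 + 27 * M ^ 2) : 6 * (M : ZMod p) ≠ 0 := by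
  have hp : p.Prime := Fact.out
  have h6 : (6 : ZMod p) ≠ 0 := by
    exact_mod_cast ((ZMod.isUnit_iff_coprime 6 p).mpr hp6.symm).ne_zero
  refine mul_ne_zero h6 fun hM ↦ ?_
  obtain ⟨m, rfl⟩ := (ZMod.intCast_zmod_eq_zero_iff_dvd M p).mp hM
  obtain ⟨l, rfl⟩ : (p : ℤ) ∣ L :=
    (Nat.prime_iff_prime_int.mp hp).dvd_of_dvd_pow (n := 2) ⟨4 - 27 * p * m ^ 2, by linarith⟩
  have hp4 : (p : ℤ) ∣ (2 ^ 2 : ℕ) :=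
    ⟨l ^ 2 + 27 * m ^ 2, mul_left_cancel₀ (Int.natCast_ne_zero.mpr hp.ne_zero)
      (by push_cast; linear_combination h)⟩
  have hp2 : p ∣ 2 := hp.dvd_of_dvd_pow (Int.natCast_dvd_natCast.mp hp4)
  exact hp.coprime_iff_not_dvd.mp hp6 (hp2.mul_right 3)

open EisensteinInt

theorem map_jacobiSum_pow_eq_mul_map_star_pow {F K : Type*} [Field F] [Fintype F] [Field K] {q : ℕ}
    [Fact q.Prime] [CharP K q] (hqF : (q : F) ≠ 0) (hq3 : ¬ 3 ∣ q)
    {f : EisensteinInt →+* K} (hf : IsPrimitiveRoot (f ω) 3)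
    {χ : MulChar F EisensteinInt} (hχ : orderOf χ = 3) :
    f (jacobiSum χ χ) ^ ((q + 1) / 3) =
      f (χ q) ^ q * f (star (jacobiSum χ χ)) ^ ((q + 1) / 3) := by
  have hinj := injOn_setOf_pow_eq_one isPrimitiveRoot_omega hf
  have hfχ : orderOf (χ.ringHomComp f) = 3 :=
    (orderOf_mulChar_ringHomComp hinj (orderOf_dvd_iff_pow_eq_one.mp hχ.dvd)).trans hχ
  simpa only [MulChar.ringHomComp_inv, jacobiSum_ringHomComp, MulChar.ringHomComp_apply,
    star_jacobiSum] using jacobiSum_pow_eq_mul_jacobiSum_inv_pow hqF hq3 hfχ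

variable {p q : ℕ} [Fact p.Prime] [Fact q.Prime] {K : Type*} [Field K] [CharP K q] {L M : ℤ}

theorem map_twicePrimary_pow_eq_mul_map_star_pow (hp3 : p % 3 = 1) (hq5 : 5 ≤ q) (hpq : p ≠ q)
    (h : (4 * p : ℤ) = L ^ 2 + 27 * M ^ 2) {f : EisensteinInt →+* K}
    (hf : IsPrimitiveRoot (f ω) 3) {φ : EisensteinInt →+* ZMod p}
    (hφ : φ (twicePrimary L M) = 0) {χ : MulChar (ZMod p) EisensteinInt}
    (hχ : IsPowerResidueChar φ 3 χ) :
    f (twicePrimary L M) ^ ((q + 1) / 3) =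
      f (χ q) ^ q * f (star (twicePrimary L M)) ^ ((q + 1) / 3) := by
  have hp : p.Prime := Fact.out
  have hq : q.Prime := Fact.out
  have hp31 : 3 ∣ p - 1 := by omega
  have hq3 : ¬ 3 ∣ q := by
    rw [Nat.prime_dvd_prime_iff_eq Nat.prime_three hq]
    omega
  have h2 : (2 : K) ≠ 0 := by
    exact_mod_cast prime_cast_ne_zero (R := K) hq Nat.prime_two (by omega)
  obtain ⟨c, hc, ht⟩ : ∃ c : ℤ, (c : K) ≠ 0 ∧ twicePrimary L M = c * jacobiSum χ χ := by
    rcases two_mul_jacobiSum_eq_or_eq_neg_twicePrimary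
      (coprime_six_of_mod_three_eq_one hp hp3) hp31 hχ h hφ with hJ | hJ
    · exact ⟨2, by simpa using h2, by simp [← hJ]⟩
    · exact ⟨-2, by simpa using h2, by simp [hJ]⟩
  rw [ht, star_mul', star_intCast, map_mul, map_mul, map_intCast, mul_pow_eq_mul_mul_pow_iff hc]
  exact map_jacobiSum_pow_eq_mul_map_star_pow (prime_cast_ne_zero hp hq hpq) hq3 hf
    (hχ.orderOf_eq (by rwa [ZMod.card]))

theorem map_star_twicePrimary_ne_zero (hq2 : q ≠ 2) (hpq : p ≠ q)
    (h : (4 * p : ℤ) = L ^ 2 + 27 * M ^ 2) (f : EisensteinInt →+* K) :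
    f (star (twicePrimary L M)) ≠ 0 := by
  have h2 : ((2 : ℕ) : K) ≠ 0 := prime_cast_ne_zero (Fact.out : q.Prime) Nat.prime_two hq2
  have hpK : (p : K) ≠ 0 := prime_cast_ne_zero (Fact.out : q.Prime) Fact.out hpq.symm
  apply map_ne_zero_of_intCast_norm_ne_zero
  rw [QuadraticAlgebra.norm_star, norm_twicePrimary, ← h]
  simpa [show (4 : K) = 2 * 2 by norm_num, hpK] using h2

theorem natCast_pow_eq_iff_pow_eq_mul_pow (hp3 : p % 3 = 1) (hq5 : 5 ≤ q) (hpq : p ≠ q)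
    (h : (4 * p : ℤ) = L ^ 2 + 27 * M ^ 2) {w : K} (hw : IsPrimitiveRoot w 3) :
    (q : ZMod p) ^ ((p - 1) / 3) =
        ((-(L + 3 * M) : ℤ) : ZMod p) * ((6 * M : ℤ) : ZMod p)⁻¹ ↔
      (L + 3 * M * (1 + 2 * w)) ^ ((q + 1) / 3) =
        w ^ q * (L - 3 * M * (1 + 2 * w)) ^ ((q + 1) / 3) := by
  have hqp : (q : ZMod p) ≠ 0 := prime_cast_ne_zero Fact.out Fact.out hpq
  have hM : 6 * (M : ZMod p) ≠ 0 :=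
    six_mul_intCast_ne_zero (coprime_six_of_mod_three_eq_one Fact.out hp3) h
  push_cast
  have hr : IsPrimitiveRoot (-(L + 3 * M) * (6 * M : ZMod p)⁻¹) 3 :=
    isPrimitiveRoot_three_of_sq_add_sq
      (by simpa using congrArg (Int.cast : ℤ → ZMod p) h.symm) hM
  have hr0 := sq_add_self_add_one_eq_zero_of_isPrimitiveRoot hr
  have hw0 := sq_add_self_add_one_eq_zero_of_isPrimitiveRoot hw
  have hrω : IsPrimitiveRoot (lift hr0 ω) 3 := by rwa [lift_omega]
  have hwω : IsPrimitiveRoot (lift hw0 ω) 3 := by rwa [lift_omega]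
  have hφ : lift hr0 (twicePrimary L M) = 0 := by
    rw [lift_twicePrimary]
    linear_combination (-(L + 3 * M : ZMod p)) * mul_inv_cancel₀ hM
  obtain ⟨χ, hχ⟩ := exists_isPowerResidueChar isPrimitiveRoot_omega hrω
  calc
    _ ↔ lift hr0 (χ q) = lift hr0 ω := by rw [hχ.map_apply, ZMod.card, lift_omega]
    _ ↔ χ q = ω :=
      map_mulChar_apply_eq_map_iff isPrimitiveRoot_omega hrω hχ.pow_eq_one hqp.isUnit
    _ ↔ lift hw0 (χ q) = lift hw0 ω :=
      (map_mulChar_apply_eq_map_iff isPrimitiveRoot_omega hwω hχ.pow_eq_one hqp.isUnit).symm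
    _ ↔ lift hw0 (χ q) ^ q = w ^ q := by
      rw [lift_omega]
      exact (frobenius_inj K q).eq_iff.symm
    _ ↔ _ := by
      rw [← lift_twicePrimary hw0, ← lift_star_twicePrimary hw0,
        map_twicePrimary_pow_eq_mul_map_star_pow hp3 hq5 hpq h hwω hφ hχ,
        mul_left_inj' (pow_ne_zero _ (map_star_twicePrimary_ne_zero (by omega) hpq h _))]

end CubicResidueCriterion

/-- The value `F_q(L,M)` is constant along lines through the origin modulo `q`:
if `(L', M') ≡ (kL, kM) (mod q)` with `q ∤ k`, then the character condition
`q^{(p−1)/3} ≡ −(L+3M)(6M)⁻¹ (mod p)` holds for `(p, L, M)` iff it holds for `(p', L', M')`. -/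
theorem character_constant_on_lines (q p p' : ℕ) (hq : q.Prime) (hq5 : 5 ≤ q)
    (hp : p.Prime) (hp' : p'.Prime) (hp3 : p % 3 = 1) (hp'3 : p' % 3 = 1)
    (hpq : p ≠ q) (hp'q : p' ≠ q)
    (L M L' M' : ℤ)
    (h : (4 * p : ℤ) = L ^ 2 + 27 * M ^ 2)
    (h' : (4 * p' : ℤ) = L' ^ 2 + 27 * M' ^ 2)
    (k : ℤ) (hk : ¬ (q : ℤ) ∣ k)
    (hL : L' ≡ k * L [ZMOD (q : ℤ)]) (hM : M' ≡ k * M [ZMOD (q : ℤ)]) :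
    ((q : ZMod p) ^ ((p - 1) / 3) =
        ((-(L + 3 * M) : ℤ) : ZMod p) * (((6 * M : ℤ) : ZMod p))⁻¹ ↔
      (q : ZMod p') ^ ((p' - 1) / 3) =
        ((-(L' + 3 * M') : ℤ) : ZMod p') * (((6 * M' : ℤ) : ZMod p'))⁻¹) := by
  have : Fact q.Prime := ⟨hq⟩
  have : Fact p.Prime := ⟨hp⟩
  have : Fact p'.Prime := ⟨hp'⟩
  have : NeZero ((3 : ℕ) : ZMod q) := ⟨prime_cast_ne_zero hq Nat.prime_three (by omega)⟩
  let K := CyclotomicField 3 (ZMod q)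
  have : CharP K q := charP_of_injective_algebraMap (algebraMap (ZMod q) K).injective q
  have hw := IsCyclotomicExtension.zeta_spec 3 (ZMod q) K
  have hkK : (k : K) ≠ 0 := (CharP.intCast_eq_zero_iff K q k).not.mpr hk
  have hLK : (L' : K) = k * L := by rw [(CharP.intCast_eq_intCast K q).mpr hL, Int.cast_mul]
  have hMK : (M' : K) = k * M := by rw [(CharP.intCast_eq_intCast K q).mpr hM, Int.cast_mul]
  have hadd (s : K) : L' + 3 * M' * s = k * (L + 3 * M * s) := by rw [hLK, hMK]; ring
  have hsub (s : K) : L' - 3 * M' * s = k * (L - 3 * M * s) := by rw [hLK, hMK]; ring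
  rw [natCast_pow_eq_iff_pow_eq_mul_pow hp3 hq5 hpq h hw,
    natCast_pow_eq_iff_pow_eq_mul_pow hp'3 hq5 hp'q h' hw, hadd, hsub,
    mul_pow_eq_mul_mul_pow_iff hkK]
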